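/- Let U ⊆ ℝ² be open with coordinates (X¹, X²), let λ¹, λ² : U → ℝ be C² with λ¹ ≠ λ² pointwise, set A = ∂₂λ¹/(λ² − λ¹) and B = ∂₁λ²/(λ¹ − λ²), and assume A and B are C¹ and nowhere vanishing. Let Γ be the torsion-free connection with nonzero components Γ¹₁₁ = ∂₁A/A − 2B, Γ²₂₂ = ∂₂B/B − 2A, Γ¹₁₂ = Γ¹₂₁ = −(½∂₂A/A + A), Γ²₁₂ = Γ²₂₁ = −(½∂₁B/B + B), and Γ¹₂₂ = Γ²₁₁ = 0. Then C¹ functions f, k : U → ℝ satisfy the three equations ∂₂k + 2Ak = 0, ∂₁f + 2Bf = 0, and (∂₂A + A²)f + (∂₁B + B²)k + ½A∂₂f + ½B∂₁k = 0 if and only if the 1-form K with components K₁ = A·f, K₂ = B·k satisfies the Killing equations ∇_{(a}K_{b)} = 0 for Γ. (Hence the Hamiltonian structures of the hydrodynamic-type system with characteristic velocities λ¹, λ² correspond exactly to linear first integrals of Γ.) -/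

import Mathlib

/-- Partial derivative `∂_{i+1} f` on `ℝ²` (points as `Fin 2 → ℝ`; index `0 ↔ X¹`). -/
noncomputable def pdv (i : Fin 2) (f : (Fin 2 → ℝ) → ℝ) (x : Fin 2 → ℝ) : ℝ :=
  fderiv ℝ f x (Pi.single i 1)

/-- The connection (4.5) of the text built from `A` and `B`: nonzero components
`Γ¹₁₁ = ∂₁A/A − 2B`, `Γ²₂₂ = ∂₂B/B − 2A`, `Γ¹₁₂ = −(½∂₂A/A + A)`,
`Γ²₁₂ = −(½∂₁B/B + B)` (index `0 ↔ 1`, `1 ↔ 2`). -/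
noncomputable def gammaAB (A B : (Fin 2 → ℝ) → ℝ) :
    Fin 2 → Fin 2 → Fin 2 → (Fin 2 → ℝ) → ℝ :=
  fun a b c x =>
    if a = 0 then
      (if b = 0 ∧ c = 0 then pdv 0 A x / A x - 2 * B x
       else if b ≠ c then -((1 / 2) * pdv 1 A x / A x + A x)
       else 0)
    else
      (if b = 1 ∧ c = 1 then pdv 1 B x / B x - 2 * A x
       else if b ≠ c then -((1 / 2) * pdv 0 B x / B x + B x)
       else 0)

/-- Covariant derivative `∇_a K_b` of a 1-form. -/
noncomputable def covForm (Γ : Fin 2 → Fin 2 → Fin 2 → (Fin 2 → ℝ) → ℝ)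
    (K : Fin 2 → (Fin 2 → ℝ) → ℝ) (a b : Fin 2) (x : Fin 2 → ℝ) : ℝ :=
  pdv a (K b) x - ∑ c, Γ c a b x * K c x

/-! The weights `A`, `B` in `K = (A f, B k)` are integrating factors: the logarithmic derivatives
in the connection cancel the terms of the Leibniz rule where a weight is differentiated along its
own index, so that
`∇₁K₁ = A (∂₁f + 2Bf)`, `∇₂K₂ = B (∂₂k + 2Ak)`, and `∇₁K₂ + ∇₂K₁` is twice the left-hand side of
the flatness condition. As `A` and `B` do not vanish, the two systems agree point by point. -/

theorem pdv_mul {g h : (Fin 2 → ℝ) → ℝ} {x : Fin 2 → ℝ} (hg : DifferentiableAt ℝ g x)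
    (hh : DifferentiableAt ℝ h x) (i : Fin 2) :
    pdv i (fun y => g y * h y) x = g x * pdv i h x + h x * pdv i g x := by
  simp [pdv, fderiv_fun_mul hg hh]

theorem forall_add_swap_eq_zero_iff {M : Type*} [AddCommMonoid M] [IsAddTorsionFree M]
    (T : Fin 2 → Fin 2 → M) :
    (∀ a b, T a b + T b a = 0) ↔ T 0 0 = 0 ∧ T 1 1 = 0 ∧ T 0 1 + T 1 0 = 0 := by
  have add_self_iff (m : M) : m + m = 0 ↔ m = 0 := by rw [← two_nsmul, two_nsmul_eq_zero]
  simp only [Fin.forall_fin_two, add_self_iff, add_comm (T 1 0)]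
  tauto

section CovariantDerivative

variable (A B : (Fin 2 → ℝ) → ℝ) (K : Fin 2 → (Fin 2 → ℝ) → ℝ) (x : Fin 2 → ℝ)

theorem covForm_gammaAB_zero_zero :
    covForm (gammaAB A B) K 0 0 x = pdv 0 (K 0) x - (pdv 0 A x / A x - 2 * B x) * K 0 x := by
  simp [covForm, gammaAB]

theorem covForm_gammaAB_one_one :
    covForm (gammaAB A B) K 1 1 x = pdv 1 (K 1) x - (pdv 1 B x / B x - 2 * A x) * K 1 x := by
  simp [covForm, gammaAB]

theorem covForm_gammaAB_of_ne {a b : Fin 2} (hab : a ≠ b) :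
    covForm (gammaAB A B) K a b x = pdv a (K b) x
      + ((1 / 2) * pdv 1 A x / A x + A x) * K 0 x
      + ((1 / 2) * pdv 0 B x / B x + B x) * K 1 x := by
  have not_both (c : Fin 2) : ¬(a = c ∧ b = c) := fun h => hab (h.1.trans h.2.symm)
  simp only [covForm, gammaAB, Fin.sum_univ_two, not_both, hab, ne_eq, not_false_eq_true,
    one_ne_zero, if_true, if_false]
  ring

end CovariantDerivative

/-- The 1-form `K = (A f, B k)` attached to the inverse-metric coefficients `f` and `k`. -/
def weightedForm (A B f k : (Fin 2 → ℝ) → ℝ) : Fin 2 → (Fin 2 → ℝ) → ℝ :=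
  ![fun y => A y * f y, fun y => B y * k y]

section WeightedForm

variable {A B f k : (Fin 2 → ℝ) → ℝ} {x : Fin 2 → ℝ}

theorem covForm_weightedForm_zero_zero (hA : DifferentiableAt ℝ A x)
    (hf : DifferentiableAt ℝ f x) (hA0 : A x ≠ 0) :
    covForm (gammaAB A B) (weightedForm A B f k) 0 0 x
      = A x * (pdv 0 f x + 2 * B x * f x) := by
  simp only [covForm_gammaAB_zero_zero, weightedForm, Matrix.cons_val_zero, pdv_mul hA hf]
  field_simp
  ring

theorem covForm_weightedForm_one_one (hB : DifferentiableAt ℝ B x)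
    (hk : DifferentiableAt ℝ k x) (hB0 : B x ≠ 0) :
    covForm (gammaAB A B) (weightedForm A B f k) 1 1 x
      = B x * (pdv 1 k x + 2 * A x * k x) := by
  simp only [covForm_gammaAB_one_one, weightedForm, Matrix.cons_val_one, Matrix.cons_val_zero,
    pdv_mul hB hk]
  field_simp
  ring

theorem covForm_weightedForm_zero_one_add_one_zero
    (hA : DifferentiableAt ℝ A x) (hB : DifferentiableAt ℝ B x)
    (hf : DifferentiableAt ℝ f x) (hk : DifferentiableAt ℝ k x)
    (hA0 : A x ≠ 0) (hB0 : B x ≠ 0) :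
    covForm (gammaAB A B) (weightedForm A B f k) 0 1 x
        + covForm (gammaAB A B) (weightedForm A B f k) 1 0 x
      = 2 * ((pdv 1 A x + (A x) ^ 2) * f x + (pdv 0 B x + (B x) ^ 2) * k x
          + (1 / 2) * A x * pdv 1 f x + (1 / 2) * B x * pdv 0 k x) := by
  simp only [covForm_gammaAB_of_ne _ _ _ _ zero_ne_one, covForm_gammaAB_of_ne _ _ _ _ one_ne_zero,
    weightedForm, Matrix.cons_val_zero, Matrix.cons_val_one, pdv_mul hA hf, pdv_mul hB hk]
  field_simp
  ring

theorem killing_weightedForm_at_iff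
    (hA : DifferentiableAt ℝ A x) (hB : DifferentiableAt ℝ B x)
    (hf : DifferentiableAt ℝ f x) (hk : DifferentiableAt ℝ k x)
    (hA0 : A x ≠ 0) (hB0 : B x ≠ 0) :
    (∀ a b : Fin 2, covForm (gammaAB A B) (weightedForm A B f k) a b x
        + covForm (gammaAB A B) (weightedForm A B f k) b a x = 0)
      ↔ pdv 1 k x + 2 * A x * k x = 0
        ∧ pdv 0 f x + 2 * B x * f x = 0
        ∧ (pdv 1 A x + (A x) ^ 2) * f x + (pdv 0 B x + (B x) ^ 2) * k x
            + (1 / 2) * A x * pdv 1 f x + (1 / 2) * B x * pdv 0 k x = 0 := by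
  rw [forall_add_swap_eq_zero_iff fun a b => covForm (gammaAB A B) (weightedForm A B f k) a b x,
    covForm_weightedForm_zero_zero hA hf hA0, covForm_weightedForm_one_one hB hk hB0,
    covForm_weightedForm_zero_one_add_one_zero hA hB hf hk hA0 hB0,
    mul_eq_zero_iff_left hA0, mul_eq_zero_iff_left hB0, mul_eq_zero_iff_left two_ne_zero,
    and_left_comm]

end WeightedForm

theorem hamiltonian_structures_iff_killing_forms_general
    {U : Set (Fin 2 → ℝ)} {A B f k : (Fin 2 → ℝ) → ℝ}
    (hA : ∀ x ∈ U, DifferentiableAt ℝ A x) (hB : ∀ x ∈ U, DifferentiableAt ℝ B x)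
    (hA0 : ∀ x ∈ U, A x ≠ 0) (hB0 : ∀ x ∈ U, B x ≠ 0)
    (hf : ∀ x ∈ U, DifferentiableAt ℝ f x) (hk : ∀ x ∈ U, DifferentiableAt ℝ k x) :
    ((∀ x ∈ U, pdv 1 k x + 2 * A x * k x = 0)
      ∧ (∀ x ∈ U, pdv 0 f x + 2 * B x * f x = 0)
      ∧ (∀ x ∈ U,
          (pdv 1 A x + (A x) ^ 2) * f x + (pdv 0 B x + (B x) ^ 2) * k x
            + (1 / 2) * A x * pdv 1 f x + (1 / 2) * B x * pdv 0 k x = 0))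
    ↔ (∀ a b : Fin 2, ∀ x ∈ U,
        covForm (gammaAB A B) (weightedForm A B f k) a b x
          + covForm (gammaAB A B) (weightedForm A B f k) b a x = 0) := by
  have killing_at_iff (x : Fin 2 → ℝ) (hx : x ∈ U) :=
    killing_weightedForm_at_iff (hA x hx) (hB x hx) (hf x hx) (hk x hx) (hA0 x hx) (hB0 x hx)
  rw [← forall₂_and, ← forall₂_and, ← forall₂_congr killing_at_iff]
  exact ⟨fun h a b x hx => h x hx a b, fun h x hx a b => h a b x hx⟩

/-- Hamiltonian formulations of the hydrodynamic-type system with characteristic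
velocities `λ¹, λ²`, i.e. solutions `(f, k)` of `∂₂k + 2Ak = 0`, `∂₁f + 2Bf = 0`
and the flatness condition, correspond exactly to Killing 1-forms
`K = (Af, Bk)` of the connection `gammaAB A B`. -/
theorem hamiltonian_structures_iff_killing_forms
    (U : Set (Fin 2 → ℝ)) (hU : IsOpen U)
    (lam1 lam2 : (Fin 2 → ℝ) → ℝ)
    (hlam1 : ContDiffOn ℝ 2 lam1 U) (hlam2 : ContDiffOn ℝ 2 lam2 U)
    (hne : ∀ x ∈ U, lam1 x ≠ lam2 x)
    (A B : (Fin 2 → ℝ) → ℝ)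
    (hA : ∀ x ∈ U, A x = pdv 1 lam1 x / (lam2 x - lam1 x))
    (hB : ∀ x ∈ U, B x = pdv 0 lam2 x / (lam1 x - lam2 x))
    (hAC1 : ContDiffOn ℝ 1 A U) (hBC1 : ContDiffOn ℝ 1 B U)
    (hA0 : ∀ x ∈ U, A x ≠ 0) (hB0 : ∀ x ∈ U, B x ≠ 0)
    (f k : (Fin 2 → ℝ) → ℝ)
    (hf : ContDiffOn ℝ 1 f U) (hk : ContDiffOn ℝ 1 k U) :
    ((∀ x ∈ U, pdv 1 k x + 2 * A x * k x = 0)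
      ∧ (∀ x ∈ U, pdv 0 f x + 2 * B x * f x = 0)
      ∧ (∀ x ∈ U,
          (pdv 1 A x + (A x) ^ 2) * f x + (pdv 0 B x + (B x) ^ 2) * k x
            + (1 / 2) * A x * pdv 1 f x + (1 / 2) * B x * pdv 0 k x = 0))
    ↔ (∀ a b : Fin 2, ∀ x ∈ U,
        covForm (gammaAB A B) ![fun y => A y * f y, fun y => B y * k y] a b x
          + covForm (gammaAB A B) ![fun y => A y * f y, fun y => B y * k y] b a x
          = 0) := by
  have differentiableAt_of_C1 {g : (Fin 2 → ℝ) → ℝ} (hg : ContDiffOn ℝ 1 g U) (x) (hx : x ∈ U) :=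
    (hg.differentiableOn one_ne_zero).differentiableAt (hU.mem_nhds hx)
  exact hamiltonian_structures_iff_killing_forms_general (differentiableAt_of_C1 hAC1)
    (differentiableAt_of_C1 hBC1) hA0 hB0 (differentiableAt_of_C1 hf) (differentiableAt_of_C1 hk)
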